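/- Let A be a unital complex Banach algebra, let X be a complex Banach space, and let φ : A × A → X be a continuous ℂ-bilinear map such that φ(a,b) = 0 whenever a, b ∈ A satisfy ab = ba = 0. Then φ(a,x) + φ(x,a) = φ(ax, 1) + φ(1, xa) and φ(x,1) = φ(1,x) for every a ∈ A and every x in the norm closure of Im(A). In particular, if A equals the norm closure of Im(A), then φ(a,b) + φ(b,a) = φ(ab, 1) + φ(1, ba) and φ(a,1) = φ(1,a) for all a, b ∈ A. -/

import Mathlib

/-- The identity for a single idempotent `p`, via the Peirce decomposition of `a`. -/
theorem idem_aux {A X : Type*} [NormedRing A] [NormedAlgebra ℂ A]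
    [NormedAddCommGroup X] [NormedSpace ℂ X]
    (φ : A →L[ℂ] A →L[ℂ] X)
    (h : ∀ a b : A, a * b = 0 → b * a = 0 → φ a b = 0) (p : A) (hp : p * p = p) :
    (∀ a : A, φ a p + φ p a = φ (a * p) 1 + φ 1 (p * a)) ∧ φ p 1 = φ 1 p := by
  have hpq : φ p (1 - p) = 0 := h _ _ (by rw [mul_sub, hp]; simp) (by rw [sub_mul, hp]; simp)
  have hqp : φ (1 - p) p = 0 := h _ _ (by rw [sub_mul, hp]; simp) (by rw [mul_sub, hp]; simp)
  have c11 : ∀ a : A, p * a = a → a * p = a →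
      φ a p + φ p a = φ (a * p) 1 + φ 1 (p * a) := by
    intro a h1 h2
    have e1 : φ a (1 - p) = 0 := h _ _ (by rw [mul_sub, h2]; simp) (by rw [sub_mul, h1]; simp)
    have e2 : φ (1 - p) a = 0 := h _ _ (by rw [sub_mul, h1]; simp) (by rw [mul_sub, h2]; simp)
    rw [h1, h2]
    simp only [map_sub, ContinuousLinearMap.sub_apply, sub_eq_zero] at e1 e2
    rw [e1, e2]
  have c22 : ∀ a : A, p * a = 0 → a * p = 0 →
      φ a p + φ p a = φ (a * p) 1 + φ 1 (p * a) := by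
    intro a h1 h2
    rw [h1, h2, h a p h2 h1, h p a h1 h2]
    simp
  have c12 : ∀ a : A, p * a = a → a * p = 0 →
      φ a p + φ p a = φ (a * p) 1 + φ 1 (p * a) := by
    intro a h1 h2
    have h3 : a * a = 0 := by
      calc a * a = a * (p * a) := by rw [h1]
        _ = 0 := by rw [← mul_assoc, h2, zero_mul]
    have e0 : φ a a = 0 := h _ _ h3 h3
    have e2 : φ (1 - p - a) (p + a) = 0 := by
      apply h <;> simp [mul_add, add_mul, mul_sub, sub_mul, hp, h1, h2, h3]
    simp only [map_sub, map_add, ContinuousLinearMap.sub_apply] at e2 hqp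
    rw [h1, h2]
    simp only [map_zero, ContinuousLinearMap.zero_apply, zero_add]
    have e3 : φ 1 a - (φ a p + φ p a) = 0 := by
      rw [← e2]
      rw [sub_eq_zero] at hqp
      rw [hqp, e0]; abel
    exact (sub_eq_zero.mp e3).symm
  have c21 : ∀ a : A, p * a = 0 → a * p = a →
      φ a p + φ p a = φ (a * p) 1 + φ 1 (p * a) := by
    intro a h1 h2
    have h3 : a * a = 0 := by
      calc a * a = (a * p) * a := by rw [h2]
        _ = 0 := by rw [mul_assoc, h1, mul_zero]
    have e0 : φ a a = 0 := h _ _ h3 h3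
    have e2 : φ (p + a) (1 - p - a) = 0 := by
      apply h <;> simp [mul_add, add_mul, mul_sub, sub_mul, hp, h1, h2, h3]
    simp only [map_sub, map_add, ContinuousLinearMap.add_apply] at e2 hpq
    rw [h1, h2]
    simp only [map_zero, add_zero]
    have e3 : φ a 1 - (φ a p + φ p a) = 0 := by
      rw [← e2]
      rw [sub_eq_zero] at hpq
      rw [hpq, e0]; abel
    exact (sub_eq_zero.mp e3).symm
  have hp' : ∀ b : A, p * (p * b) = p * b := fun b => by rw [← mul_assoc, hp]
  refine ⟨fun a => ?_, ?_⟩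
  · have d11 := c11 (p * a * p) (by simp [mul_assoc, hp'])
      (by simp [mul_assoc, hp])
    have d12 := c12 (p * a - p * a * p) (by simp [mul_assoc, mul_sub, hp'])
      (by simp [mul_assoc, sub_mul, hp])
    have d21 := c21 (a * p - p * a * p) (by simp [mul_assoc, mul_sub, hp'])
      (by simp [mul_assoc, sub_mul, hp])
    have d22 := c22 (a - p * a - a * p + p * a * p) (by simp [mul_assoc, mul_sub, mul_add, hp'])
      (by simp [mul_assoc, sub_mul, add_mul, hp])
    have ha : a = p * a * p + (p * a - p * a * p) + (a * p - p * a * p)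
      + (a - p * a - a * p + p * a * p) := by abel
    have key : ∀ u v : A, φ u p + φ p u = φ (u * p) 1 + φ 1 (p * u) →
        φ v p + φ p v = φ (v * p) 1 + φ 1 (p * v) →
        φ (u + v) p + φ p (u + v) = φ ((u + v) * p) 1 + φ 1 (p * (u + v)) := by
      intro u v hu hv
      simp only [add_mul, mul_add, map_add, ContinuousLinearMap.add_apply]
      rw [add_add_add_comm, hu, hv, add_add_add_comm]
    rw [ha]
    exact key _ _ (key _ _ (key _ _ d11 d12) d21) d22
  · simp only [map_sub, ContinuousLinearMap.sub_apply, sub_eq_zero] at hpq hqp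
    rw [hpq, hqp]


/-- Corollary 3.6: continuous version of Theorem 3.5 for unital complex Banach algebras,
with `x` ranging over the norm closure of the span of idempotents, together with the
particular case where the algebra equals that closure. -/
theorem continuous_bilinear_condition_G_closure_span_idempotents
    {A X : Type*} [NormedRing A] [NormedAlgebra ℂ A] [CompleteSpace A]
    [NormedAddCommGroup X] [NormedSpace ℂ X] [CompleteSpace X]
    (φ : A →L[ℂ] A →L[ℂ] X)
    (h : ∀ a b : A, a * b = 0 → b * a = 0 → φ a b = 0) :
    (∀ a : A, ∀ x ∈ closure ((Submodule.span ℂ {p : A | p * p = p} : Submodule ℂ A) : Set A),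
      φ a x + φ x a = φ (a * x) 1 + φ 1 (x * a) ∧ φ x 1 = φ 1 x) ∧
    ((closure ((Submodule.span ℂ {p : A | p * p = p} : Submodule ℂ A) : Set A) = Set.univ) →
      ∀ a b : A, (φ a b + φ b a = φ (a * b) 1 + φ 1 (b * a)) ∧ φ a 1 = φ 1 a) := by
  have main : ∀ a : A, ∀ x ∈ closure ((Submodule.span ℂ {p : A | p * p = p} : Submodule ℂ A) : Set A),
      φ a x + φ x a = φ (a * x) 1 + φ 1 (x * a) ∧ φ x 1 = φ 1 x := by
    intro a x hx
    have hcl : IsClosed {x : A | φ a x + φ x a = φ (a * x) 1 + φ 1 (x * a) ∧ φ x 1 = φ 1 x} := by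
      apply IsClosed.and
      · exact isClosed_eq (by fun_prop) (by fun_prop)
      · exact isClosed_eq (by fun_prop) (by fun_prop)
    refine closure_minimal ?_ hcl hx
    intro y hy
    induction hy using Submodule.span_induction with
    | mem p hp => exact ⟨(idem_aux φ h p hp).1 a, (idem_aux φ h p hp).2⟩
    | zero => simp
    | add u v _ _ hu hv =>
      obtain ⟨hu1, hu2⟩ := hu
      obtain ⟨hv1, hv2⟩ := hv
      constructor
      · simp only [add_mul, mul_add, map_add, ContinuousLinearMap.add_apply]
        rw [add_add_add_comm, hu1, hv1, add_add_add_comm]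
      · simp only [map_add, ContinuousLinearMap.add_apply, hu2, hv2]
    | smul c u _ hu =>
      obtain ⟨hu1, hu2⟩ := hu
      constructor
      · simp only [smul_mul_assoc, mul_smul_comm, map_smul, ContinuousLinearMap.smul_apply]
        rw [← smul_add, hu1, smul_add]
      · simp only [map_smul, ContinuousLinearMap.smul_apply, hu2]
  refine ⟨main, fun hu a b => ⟨(main a b (by rw [hu]; trivial)).1, (main 1 a (by rw [hu]; trivial)).2⟩⟩
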